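/- Lemma 5: for every iteration i (1 ≤ i ≤ ⌈m/2⌉) of Algorithm 2 run with the x-approval rule, |U^i| = 1 or |D^i| = 1. -/

import Mathlib

open Finset
open scoped Classical

variable {O : Type*} [Fintype O] [DecidableEq O]

/-- A vote is a strict total order on the outcome set `O`, represented by its position
function: `p o` is the number of outcomes that `o` is preferred over, so the most
preferred outcome has position `m - 1` and the least preferred position `0`. -/
def IsVote (p : O → ℕ) : Prop :=
  Function.Injective p ∧ ∀ o : O, p o < Fintype.card O

/-- The total score of candidate `c` under the scoring vector `sc` (`sc j` is the number
of points awarded to the candidate at position `j`) for the profile `P`. -/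
def score (sc : ℕ → ℤ) (P : List (O → ℕ)) (c : O) : ℤ :=
  (P.map fun q => sc (q c)).sum

/-- The positional scoring rule used as a social welfare function: candidates are ordered
by decreasing total score, ties being broken by the fixed strict tie-breaking order `tb`
(a smaller `tb`-value means preferred by the tie-breaking order).  The output is again a
position function: the position of `c` is the number of candidates ranked below `c`. -/
def swf (sc : ℕ → ℤ) (tb : O → ℕ) (P : List (O → ℕ)) : O → ℕ := fun c =>
  (univ.filter fun c' =>
      score sc P c' < score sc P c ∨ (score sc P c' = score sc P c ∧ tb c < tb c')).card

/-- `topSet p j = A^j(p)`, the set of the `j` most preferred outcomes of `p`. -/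
def topSet (p : O → ℕ) (j : ℕ) : Finset O :=
  univ.filter fun o => Fintype.card O - j ≤ p o

/-- The least `j ≥ 1` for which `A^j(p_t) ∩ A^j(p_o)` is nonempty, i.e. the iteration at
which the Rational Compromise rule terminates. -/
noncomputable def rcIndex (pt po : O → ℕ) : ℕ :=
  sInf {j | 1 ≤ j ∧ (topSet pt j ∩ topSet po j).Nonempty}

/-- The Rational Compromise bargaining rule: `A^j(p_t) ∩ A^j(p_o)` for the least `j ≥ 1`
making this intersection nonempty. -/
noncomputable def RC (pt po : O → ℕ) : Finset O :=
  topSet pt (rcIndex pt po) ∩ topSet po (rcIndex pt po)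

/-- The `n` most preferred members of `S` according to the ranking `r`. -/
def topWithin (r : O → ℕ) (S : Finset O) (n : ℕ) : Finset O :=
  S.filter fun o => (S.filter fun o' => r o < r o').card < n

/-- The `n` least preferred members of `S` according to the ranking `r`. -/
def botWithin (r : O → ℕ) (S : Finset O) (n : ℕ) : Finset O :=
  S.filter fun o => (S.filter fun o' => r o' < r o).card < n

/-- The vote built by the algorithms from a current ranking `r` and a set `H`:
the members of `H` occupy the `|H|` highest positions in reverse order of `r`
(the `r`-least preferred member of `H` is placed highest), and the members of `O ∖ H`
occupy the remaining lowest positions in reverse order of `r` (the `r`-most preferred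
of them is placed lowest). -/
def buildVote (r : O → ℕ) (H : Finset O) : O → ℕ := fun o =>
  if o ∈ H then Fintype.card O - H.card + (H.filter fun h => r o < r h).card
  else (univ.filter fun c => c ∉ H ∧ r o < r c).card

/-- `H^i` for the constructive algorithms: the preferred outcome `p` together with the
`i - 1` most preferred outcomes of `p_t` that do not belong to `A^i(p_o)`. -/
def Hset (pt po : O → ℕ) (p : O) (i : ℕ) : Finset O :=
  insert p (topWithin pt ((univ \ topSet po i).erase p) (i - 1))

/-- `H^i` for the destructive algorithms: `p*`, the most preferred outcome of `p_t` other
than `e` that belongs to `A^i(p_o)`, together with the `i - 1` most preferred outcomes of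
`p_t` other than `e` and `p*`. -/
def HsetD (pt po : O → ℕ) (e : O) (i : ℕ) : Finset O :=
  topWithin pt ((topSet po i).erase e) 1 ∪
    topWithin pt ((univ.erase e) \ topWithin pt ((topSet po i).erase e) 1) (i - 1)

/-- The manipulator profile built by Algorithm 2 (for a fixed iteration whose set is `H`)
after the given number of stages: at each stage one more vote is appended, built from the
current social ranking `F(p⃗ ∪ p⃗_M)`. -/
def stageProfile (sc : ℕ → ℤ) (tb : O → ℕ) (P : List (O → ℕ)) (H : Finset O) :
    ℕ → List (O → ℕ)
  | 0 => []
  | n + 1 =>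
      stageProfile sc tb P H n ++
        [buildVote (swf sc tb (P ++ stageProfile sc tb P H n)) H]

/-- The vote constructed by Algorithm 2 at stage `ℓ` (1-indexed). -/
def stageVote (sc : ℕ → ℤ) (tb : O → ℕ) (P : List (O → ℕ)) (H : Finset O) (ℓ : ℕ) :
    O → ℕ :=
  buildVote (swf sc tb (P ++ stageProfile sc tb P H (ℓ - 1))) H

/-- The sets `U^i_s`:  `U^i_0` consists of the member of `H^i` with the lowest position in
`p_t`, and `U^i_{s+1}` adds every candidate ranked above some member of `U^i_s` by the
stage-`l` vote (`1 ≤ l < k`) but below some member of `U^i_s` by the stage-`(l+1)` vote. -/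
noncomputable def Uaux (sc : ℕ → ℤ) (tb : O → ℕ) (P : List (O → ℕ)) (pt : O → ℕ)
    (H : Finset O) (k : ℕ) : ℕ → Finset O
  | 0 => botWithin pt H 1
  | s + 1 =>
      Uaux sc tb P pt H k s ∪
        univ.filter fun u =>
          ∃ l, 1 ≤ l ∧ l < k ∧
            (∃ u' ∈ Uaux sc tb P pt H k s,
              stageVote sc tb P H l u' < stageVote sc tb P H l u) ∧
            (∃ u' ∈ Uaux sc tb P pt H k s,
              stageVote sc tb P H (l + 1) u < stageVote sc tb P H (l + 1) u')

/-- `U^i = ⋃ₛ U^i_s`. -/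
noncomputable def Uset (sc : ℕ → ℤ) (tb : O → ℕ) (P : List (O → ℕ)) (pt : O → ℕ)
    (H : Finset O) (k : ℕ) : Finset O :=
  univ.filter fun u => ∃ s, u ∈ Uaux sc tb P pt H k s

/-- The sets `D^i_s`: `D^i_0` consists of the member of `O ∖ H^i` with the highest position
in `p_t`, and `D^i_{s+1}` adds every candidate ranked below some member of `D^i_s` by the
stage-`l` vote (`1 ≤ l < k`) but above some member of `D^i_s` by the stage-`(l+1)` vote. -/
noncomputable def Daux (sc : ℕ → ℤ) (tb : O → ℕ) (P : List (O → ℕ)) (pt : O → ℕ)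
    (H : Finset O) (k : ℕ) : ℕ → Finset O
  | 0 => topWithin pt (univ \ H) 1
  | s + 1 =>
      Daux sc tb P pt H k s ∪
        univ.filter fun d =>
          ∃ l, 1 ≤ l ∧ l < k ∧
            (∃ d' ∈ Daux sc tb P pt H k s,
              stageVote sc tb P H l d < stageVote sc tb P H l d') ∧
            (∃ d' ∈ Daux sc tb P pt H k s,
              stageVote sc tb P H (l + 1) d' < stageVote sc tb P H (l + 1) d)

/-- `D^i = ⋃ₛ D^i_s`. -/
noncomputable def Dset (sc : ℕ → ℤ) (tb : O → ℕ) (P : List (O → ℕ)) (pt : O → ℕ)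
    (H : Finset O) (k : ℕ) : Finset O :=
  univ.filter fun d => ∃ s, d ∈ Daux sc tb P pt H k s

/-- The Borda scoring vector `(m-1, m-2, …, 1, 0)`: position `j` gets `j` points. -/
def bordaVec : ℕ → ℤ := fun j => (j : ℤ)

/-- The `x`-approval scoring vector for `m` candidates: the `x` highest positions get one
point, the rest get zero. -/
def approvalVec (m x : ℕ) : ℕ → ℤ := fun j => if m ≤ j + x then 1 else 0

/-- `sc` is a scoring vector for `m` candidates: `s_{m-1} ≥ … ≥ s_0 ≥ 0` and
`s_{m-1} > s_0`. -/
def IsScoringVector (m : ℕ) (sc : ℕ → ℤ) : Prop :=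
  (∀ j, j + 1 < m → sc j ≤ sc (j + 1)) ∧ 0 ≤ sc 0 ∧ sc 0 < sc (m - 1)

/-- Algorithm 1 (constructive single-voter manipulation) returns the vote `pa`:
the guard `pos(p, p_o) ≥ ⌈m/2⌉` holds and `pa` is the vote built at the first iteration
`i ∈ {1, …, ⌈m/2⌉}` at which the manipulation check succeeds. -/
def alg1Returns (sc : ℕ → ℤ) (tb : O → ℕ) (P : List (O → ℕ)) (po : O → ℕ) (p : O)
    (pa : O → ℕ) : Prop :=
  (Fintype.card O + 1) / 2 ≤ po p ∧
    ∃ i, 1 ≤ i ∧ i ≤ (Fintype.card O + 1) / 2 ∧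
      pa = buildVote (swf sc tb P) (Hset (swf sc tb P) po p i) ∧
      RC (swf sc tb (P ++ [pa])) po = {p} ∧
      ∀ j, 1 ≤ j → j < i →
        RC (swf sc tb (P ++ [buildVote (swf sc tb P) (Hset (swf sc tb P) po p j)])) po ≠
          {p}

/-- Algorithm 2 (constructive coalitional manipulation) run with `k` manipulators returns
the profile `PM`: the guard `pos(p, p_o) ≥ ⌈m/2⌉` holds and `PM` is the `k`-stage profile
built at the first iteration `i ∈ {1, …, ⌈m/2⌉}` at which the manipulation check succeeds. -/
def alg2Returns (sc : ℕ → ℤ) (tb : O → ℕ) (P : List (O → ℕ)) (po : O → ℕ) (p : O)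
    (k : ℕ) (PM : List (O → ℕ)) : Prop :=
  (Fintype.card O + 1) / 2 ≤ po p ∧
    ∃ i, 1 ≤ i ∧ i ≤ (Fintype.card O + 1) / 2 ∧
      PM = stageProfile sc tb P (Hset (swf sc tb P) po p i) k ∧
      RC (swf sc tb (P ++ PM)) po = {p} ∧
      ∀ j, 1 ≤ j → j < i →
        RC (swf sc tb (P ++ stageProfile sc tb P (Hset (swf sc tb P) po p j) k)) po ≠ {p}

/-- The modified Algorithm 1 (destructive single-voter manipulation) returns the vote
`pa`: the guard `pos(e, p_o) < ⌊m/2⌋` fails and `pa` is the vote built at the first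
iteration `i ∈ {1, …, ⌈m/2⌉}` at which `e` is excluded from the Rational Compromise. -/
def alg1ReturnsD (sc : ℕ → ℤ) (tb : O → ℕ) (P : List (O → ℕ)) (po : O → ℕ) (e : O)
    (pa : O → ℕ) : Prop :=
  Fintype.card O / 2 ≤ po e ∧
    ∃ i, 1 ≤ i ∧ i ≤ (Fintype.card O + 1) / 2 ∧
      pa = buildVote (swf sc tb P) (HsetD (swf sc tb P) po e i) ∧
      e ∉ RC (swf sc tb (P ++ [pa])) po ∧
      ∀ j, 1 ≤ j → j < i →
        e ∈ RC (swf sc tb (P ++ [buildVote (swf sc tb P) (HsetD (swf sc tb P) po e j)])) po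

/-- The modified Algorithm 2 (destructive coalitional manipulation) run with `k`
manipulators returns the profile `PM`: the guard `pos(e, p_o) < ⌊m/2⌋` fails and `PM` is
the `k`-stage profile built at the first iteration `i ∈ {1, …, ⌈m/2⌉}` at which `e` is
excluded from the Rational Compromise. -/
def alg2ReturnsD (sc : ℕ → ℤ) (tb : O → ℕ) (P : List (O → ℕ)) (po : O → ℕ) (e : O)
    (k : ℕ) (PM : List (O → ℕ)) : Prop :=
  Fintype.card O / 2 ≤ po e ∧
    ∃ i, 1 ≤ i ∧ i ≤ (Fintype.card O + 1) / 2 ∧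
      PM = stageProfile sc tb P (HsetD (swf sc tb P) po e i) k ∧
      e ∉ RC (swf sc tb (P ++ PM)) po ∧
      ∀ j, 1 ≤ j → j < i →
        e ∈ RC (swf sc tb (P ++ stageProfile sc tb P (HsetD (swf sc tb P) po e j) k)) po

/-- The set `U^i` arising from running the `k` stages of Algorithm 2 at iteration `i`. -/
noncomputable def UsetAlg (sc : ℕ → ℤ) (tb : O → ℕ) (P : List (O → ℕ)) (po : O → ℕ)
    (p : O) (i k : ℕ) : Finset O :=
  Uset sc tb P (swf sc tb P) (Hset (swf sc tb P) po p i) k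

/-- The set `D^i` arising from running the `k` stages of Algorithm 2 at iteration `i`. -/
noncomputable def DsetAlg (sc : ℕ → ℤ) (tb : O → ℕ) (P : List (O → ℕ)) (po : O → ℕ)
    (p : O) (i k : ℕ) : Finset O :=
  Dset sc tb P (swf sc tb P) (Hset (swf sc tb P) po p i) k

/-- The vote constructed at stage `ℓ` of iteration `i` of Algorithm 2. -/
def stageVoteAlg (sc : ℕ → ℤ) (tb : O → ℕ) (P : List (O → ℕ)) (po : O → ℕ)
    (p : O) (i ℓ : ℕ) : O → ℕ :=
  stageVote sc tb P (Hset (swf sc tb P) po p i) ℓ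

/-- `s_ℓ(c)`: the total score of candidate `c` in `F(p⃗ ∪ p⃗_M)` after stage `ℓ` of
iteration `i` of Algorithm 2. -/
def stageScoreAlg (sc : ℕ → ℤ) (tb : O → ℕ) (P : List (O → ℕ)) (po : O → ℕ)
    (p : O) (i ℓ : ℕ) (c : O) : ℤ :=
  score sc (P ++ stageProfile sc tb P (Hset (swf sc tb P) po p i) ℓ) c

/-- `F(p⃗ ∪ p⃗_M)` after stage `ℓ` of iteration `i` of Algorithm 2. -/
def stageSwfAlg (sc : ℕ → ℤ) (tb : O → ℕ) (P : List (O → ℕ)) (po : O → ℕ)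
    (p : O) (i ℓ : ℕ) : O → ℕ :=
  swf sc tb (P ++ stageProfile sc tb P (Hset (swf sc tb P) po p i) ℓ)

/-!
Every constructed vote puts `H` on the `|H|` highest positions. If `|H| ≤ x`, it approves all of
`H`, so the members of `H` gain points in step and their relative social ranking never changes:
the member of `H` lowest in `p_t` heads every constructed vote, nothing is ever ranked above it,
and `U` cannot grow beyond it. If `x < |H|`, it approves no outcome outside `H`, and dually the
member of `O ∖ H` highest in `p_t` comes last in every constructed vote, so `D` cannot grow.
-/

lemma card_filter_lt_le_card_filter_lt_iff {ι β : Type*} [LinearOrder β] (f : ι → β)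
    {s : Finset ι} {a b : ι} (hb : b ∈ s) :
    #{c ∈ s | f c < f a} ≤ #{c ∈ s | f c < f b} ↔ f a ≤ f b := by
  have hmono {x y : β} (hxy : x ≤ y) : {c ∈ s | f c < x} ⊆ {c ∈ s | f c < y} :=
    monotone_filter_right s fun c _ hc => hc.trans_le hxy
  refine ⟨fun h => ?_, fun h => card_le_card (hmono h)⟩
  by_contra! hba
  refine h.not_gt (card_lt_card ⟨hmono hba.le, fun hsub => ?_⟩)
  exact (mem_filter.mp (hsub (mem_filter.mpr ⟨hb, hba⟩))).2.false

section Within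

variable {α : Type*} {r : α → ℕ} {S : Finset α} {a : α}

lemma botWithin_one_eq_singleton (hr : Function.Injective r) (ha : a ∈ S)
    (hmin : ∀ b ∈ S, r a ≤ r b) : botWithin r S 1 = {a} := by
  ext b
  simp only [botWithin, mem_filter, Nat.lt_one_iff, card_eq_zero, filter_eq_empty_iff, not_lt,
    mem_singleton]
  constructor
  · rintro ⟨hb, hle⟩
    exact hr (le_antisymm (hle ha) (hmin b hb))
  · rintro rfl
    exact ⟨ha, fun c hc => hmin c hc⟩

lemma topWithin_one_eq_singleton (hr : Function.Injective r) (ha : a ∈ S)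
    (hmax : ∀ b ∈ S, r b ≤ r a) : topWithin r S 1 = {a} := by
  ext b
  simp only [topWithin, mem_filter, Nat.lt_one_iff, card_eq_zero, filter_eq_empty_iff, not_lt,
    mem_singleton]
  constructor
  · rintro ⟨hb, hle⟩
    exact hr (le_antisymm (hmax b hb) (hle ha))
  · rintro rfl
    exact ⟨ha, fun c hc => hmax c hc⟩

lemma card_topWithin_le (hr : Function.Injective r) (S : Finset α) (n : ℕ) :
    #(topWithin r S n) ≤ n := by
  have hcount {a b : α} (hb : b ∈ S) :
      #{c ∈ S | r a < r c} ≤ #{c ∈ S | r b < r c} ↔ r b ≤ r a :=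
    card_filter_lt_le_card_filter_lt_iff (OrderDual.toDual ∘ r) hb
  have hinj : Set.InjOn (fun a => #{c ∈ S | r a < r c}) (topWithin r S n) := fun a ha b hb hab =>
    hr <| le_antisymm ((hcount (mem_filter.mp ha).1).mp hab.ge)
      ((hcount (mem_filter.mp hb).1).mp hab.le)
  have hmaps : Set.MapsTo (fun a => #{c ∈ S | r a < r c}) (topWithin r S n) (range n) :=
    fun a ha => mem_coe.mpr (mem_range.mpr (mem_filter.mp ha).2)
  simpa only [card_range] using card_le_card_of_injOn _ hmaps hinj

end Within

section SocialRanking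

variable {α : Type*}

/-- The sort key of the positional scoring rule: outcomes are compared by total score, and
among equal scores the smaller `tb`-value wins, which is why `tb` enters through the order
dual. -/
def rankKey (sc : ℕ → ℤ) (tb : α → ℕ) (P : List (α → ℕ)) (c : α) : ℤ ×ₗ ℕᵒᵈ :=
  toLex (score sc P c, OrderDual.toDual (tb c))

lemma rankKey_injective (sc : ℕ → ℤ) {tb : α → ℕ} (htb : Function.Injective tb)
    (P : List (α → ℕ)) : Function.Injective (rankKey sc tb P) := fun _ _ hab =>
  htb (congrArg (fun q => OrderDual.ofDual (ofLex q).2) hab)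

lemma score_append (sc : ℕ → ℤ) (P Q : List (α → ℕ)) (c : α) :
    score sc (P ++ Q) c = score sc P c + score sc Q c := by
  simp only [score, List.map_append, List.sum_append]

lemma rankKey_append_le_iff {sc : ℕ → ℤ} (tb : α → ℕ) (P : List (α → ℕ))
    {Q : List (α → ℕ)} {a b : α} (hQ : ∀ q ∈ Q, sc (q a) = sc (q b)) :
    rankKey sc tb (P ++ Q) a ≤ rankKey sc tb (P ++ Q) b ↔
      rankKey sc tb P a ≤ rankKey sc tb P b := by
  have hscore : score sc Q a = score sc Q b := congrArg List.sum (List.map_congr_left hQ)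
  simp only [rankKey, Prod.Lex.toLex_le_toLex, score_append, hscore, add_lt_add_iff_right,
    add_left_inj]

variable [Fintype α]

lemma swf_le_swf_iff (sc : ℕ → ℤ) (tb : α → ℕ) (P : List (α → ℕ)) (a b : α) :
    swf sc tb P a ≤ swf sc tb P b ↔ rankKey sc tb P a ≤ rankKey sc tb P b := by
  have hswf (c : α) : swf sc tb P c = #{c' | rankKey sc tb P c' < rankKey sc tb P c} := by
    simp only [swf, rankKey, Prod.Lex.toLex_lt_toLex, OrderDual.toDual_lt_toDual]
  rw [hswf, hswf, card_filter_lt_le_card_filter_lt_iff _ (mem_univ b)]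

lemma swf_injective (sc : ℕ → ℤ) {tb : α → ℕ} (htb : Function.Injective tb)
    (P : List (α → ℕ)) : Function.Injective (swf sc tb P) := fun a b hab =>
  rankKey_injective sc htb P <|
    le_antisymm ((swf_le_swf_iff sc tb P a b).mp hab.le) ((swf_le_swf_iff sc tb P b a).mp hab.ge)

end SocialRanking

section BuildVote

variable {r : O → ℕ} {H : Finset O} {a o : O}

lemma buildVote_lt_of_notMem (r : O → ℕ) (ho : o ∉ H) :
    buildVote r H o < Fintype.card O - #H := by
  rw [buildVote, if_neg ho, ← card_compl]
  refine card_lt_card ⟨fun c hc => mem_compl.mpr (mem_filter.mp hc).2.1, fun hsub => ?_⟩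
  simpa using hsub (mem_compl.mpr ho)

lemma buildVote_mem_Ico_of_mem (r : O → ℕ) (ho : o ∈ H) :
    buildVote r H o ∈ Set.Ico (Fintype.card O - #H) (Fintype.card O) := by
  have hcount : #{h ∈ H | r o < r h} < #H :=
    card_lt_card (filter_ssubset.mpr ⟨o, ho, lt_irrefl _⟩)
  have hcard : #H ≤ Fintype.card O := card_le_univ H
  rw [buildVote, if_pos ho]
  exact ⟨Nat.le_add_right _ _, by omega⟩

lemma buildVote_le_of_forall_le (ha : a ∈ H) (hmin : ∀ b ∈ H, r a ≤ r b) (o : O) :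
    buildVote r H o ≤ buildVote r H a := by
  by_cases ho : o ∈ H
  · rw [buildVote, buildVote, if_pos ho, if_pos ha]
    gcongr
    exact hmin o ho
  · exact (buildVote_lt_of_notMem r ho).le.trans (buildVote_mem_Ico_of_mem r ha).1

lemma buildVote_eq_zero_of_forall_le (ha : a ∉ H) (hmax : ∀ b ∉ H, r b ≤ r a) :
    buildVote r H a = 0 := by
  rw [buildVote, if_neg ha, card_eq_zero, filter_eq_empty_iff]
  exact fun c _ hc => (hmax c hc.1).not_gt hc.2

end BuildVote

section Stages

variable {sc : ℕ → ℤ} {tb : O → ℕ} {H : Finset O}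

lemma exists_eq_buildVote_of_mem_stageProfile {P : List (O → ℕ)} {n : ℕ} {q : O → ℕ}
    (hq : q ∈ stageProfile sc tb P H n) : ∃ r, q = buildVote r H := by
  induction n with
  | zero => simp [stageProfile] at hq
  | succ n ih =>
    rcases List.mem_append.mp hq with hq | hq
    · exact ih hq
    · exact ⟨_, List.mem_singleton.mp hq⟩

lemma swf_append_stageProfile_le_iff (tb : O → ℕ) (P : List (O → ℕ)) {a b : O}
    (hab : ∀ r, sc (buildVote r H a) = sc (buildVote r H b)) (n : ℕ) :
    swf sc tb (P ++ stageProfile sc tb P H n) a ≤ swf sc tb (P ++ stageProfile sc tb P H n) b ↔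
      swf sc tb P a ≤ swf sc tb P b := by
  rw [swf_le_swf_iff, swf_le_swf_iff, rankKey_append_le_iff]
  intro q hq
  obtain ⟨r, rfl⟩ := exists_eq_buildVote_of_mem_stageProfile hq
  exact hab r

variable {P : List (O → ℕ)} {pt : O → ℕ} {a : O} {t : ℤ}

lemma stageVote_le_of_forall_le
    (hsc : ∀ j ∈ Set.Ico (Fintype.card O - #H) (Fintype.card O), sc j = t) (ha : a ∈ H)
    (hmin : ∀ b ∈ H, swf sc tb P a ≤ swf sc tb P b) (l : ℕ) (o : O) :
    stageVote sc tb P H l o ≤ stageVote sc tb P H l a := by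
  have hpoints {b : O} (hb : b ∈ H) (r : O → ℕ) : sc (buildVote r H b) = t :=
    hsc _ (buildVote_mem_Ico_of_mem r hb)
  refine buildVote_le_of_forall_le ha (fun b hb => ?_) o
  rw [swf_append_stageProfile_le_iff tb P fun r => (hpoints ha r).trans (hpoints hb r).symm]
  exact hmin b hb

lemma stageVote_eq_zero_of_forall_le
    (hsc : ∀ j < Fintype.card O - #H, sc j = t) (ha : a ∉ H)
    (hmax : ∀ b ∉ H, swf sc tb P b ≤ swf sc tb P a) (l : ℕ) :
    stageVote sc tb P H l a = 0 := by
  have hpoints {b : O} (hb : b ∉ H) (r : O → ℕ) : sc (buildVote r H b) = t :=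
    hsc _ (buildVote_lt_of_notMem r hb)
  refine buildVote_eq_zero_of_forall_le ha fun b hb => ?_
  rw [swf_append_stageProfile_le_iff tb P fun r => (hpoints hb r).trans (hpoints ha r).symm]
  exact hmax b hb

lemma Uset_eq_singleton (hbot : botWithin pt H 1 = {a})
    (htop : ∀ l o, stageVote sc tb P H l o ≤ stageVote sc tb P H l a) (k : ℕ) :
    Uset sc tb P pt H k = {a} := by
  have hUaux (s : ℕ) : Uaux sc tb P pt H k s = {a} := by
    induction s with
    | zero => exact hbot
    | succ s ih =>
      simp only [Uaux, ih, mem_singleton, exists_eq_left, (htop _ _).not_gt, false_and,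
        and_false, exists_false, filter_false, union_empty]
  simp only [Uset, hUaux, mem_singleton, exists_const, filter_eq', mem_univ, if_true]

lemma Dset_eq_singleton (htop : topWithin pt (univ \ H) 1 = {a})
    (hbot : ∀ l o, stageVote sc tb P H l a ≤ stageVote sc tb P H l o) (k : ℕ) :
    Dset sc tb P pt H k = {a} := by
  have hDaux (s : ℕ) : Daux sc tb P pt H k s = {a} := by
    induction s with
    | zero => exact htop
    | succ s ih =>
      simp only [Daux, ih, mem_singleton, exists_eq_left, (hbot _ _).not_gt, false_and,
        and_false, exists_false, filter_false, union_empty]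
  simp only [Dset, hDaux, mem_singleton, exists_const, filter_eq', mem_univ, if_true]

lemma card_Uset_eq_one (htb : Function.Injective tb) (hH : H.Nonempty)
    (hsc : ∀ j ∈ Set.Ico (Fintype.card O - #H) (Fintype.card O), sc j = t) (k : ℕ) :
    #(Uset sc tb P (swf sc tb P) H k) = 1 := by
  obtain ⟨a, ha, hmin⟩ := H.exists_min_image (swf sc tb P) hH
  rw [Uset_eq_singleton (botWithin_one_eq_singleton (swf_injective sc htb P) ha hmin)
    (stageVote_le_of_forall_le hsc ha hmin), card_singleton]

lemma card_Dset_eq_one (htb : Function.Injective tb) (hH : H ≠ univ)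
    (hsc : ∀ j < Fintype.card O - #H, sc j = t) (k : ℕ) :
    #(Dset sc tb P (swf sc tb P) H k) = 1 := by
  obtain ⟨a, ha, hmax⟩ := (univ \ H).exists_max_image (swf sc tb P)
    (sdiff_nonempty.mpr fun hsub => hH (univ_subset_iff.mp hsub))
  have hlast (l : ℕ) : stageVote sc tb P H l a = 0 :=
    stageVote_eq_zero_of_forall_le hsc (mem_sdiff.mp ha).2
      (fun b hb => hmax b (mem_sdiff.mpr ⟨mem_univ b, hb⟩)) l
  rw [Dset_eq_singleton (topWithin_one_eq_singleton (swf_injective sc htb P) ha hmax)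
    (fun l _ => (hlast l).trans_le (Nat.zero_le _)), card_singleton]

end Stages

lemma card_Hset_le {pt : O → ℕ} (hpt : Function.Injective pt) (po : O → ℕ) (p : O) {i : ℕ}
    (hi : 1 ≤ i) : #(Hset pt po p i) ≤ i :=
  calc #(Hset pt po p i)
      ≤ #(topWithin pt ((univ \ topSet po i).erase p) (i - 1)) + 1 := card_insert_le _ _
    _ ≤ (i - 1) + 1 := by gcongr; exact card_topWithin_le hpt _ _
    _ = i := Nat.sub_add_cancel hi

lemma Hset_nonempty (pt po : O → ℕ) (p : O) (i : ℕ) : (Hset pt po p i).Nonempty :=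
  insert_nonempty _ _

lemma Hset_ne_univ {pt : O → ℕ} (hpt : Function.Injective pt) (po : O → ℕ) (p : O) {i : ℕ}
    (hi : 1 ≤ i) (hi' : i < Fintype.card O) : Hset pt po p i ≠ univ :=
  (card_lt_iff_ne_univ _).mp ((card_Hset_le hpt po p hi).trans_lt hi')

theorem lemma5_U_or_D_singleton_general (x : ℕ) {tb : O → ℕ} (htb : Function.Injective tb)
    (P : List (O → ℕ)) {H : Finset O} (hH : H.Nonempty) (hH' : H ≠ univ) (k : ℕ) :
    #(Uset (approvalVec (Fintype.card O) x) tb P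
        (swf (approvalVec (Fintype.card O) x) tb P) H k) = 1 ∨
      #(Dset (approvalVec (Fintype.card O) x) tb P
        (swf (approvalVec (Fintype.card O) x) tb P) H k) = 1 := by
  rcases le_or_gt #H x with hx | hx
  · have happroved : ∀ j ∈ Set.Ico (Fintype.card O - #H) (Fintype.card O),
        approvalVec (Fintype.card O) x j = 1 := fun j hj =>
      if_pos (by have := hj.1; omega)
    exact .inl (card_Uset_eq_one htb hH happroved k)
  · have hunapproved : ∀ j < Fintype.card O - #H, approvalVec (Fintype.card O) x j = 0 :=
      fun j hj => if_neg (by omega)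
    exact .inr (card_Dset_eq_one htb hH' hunapproved k)

/-- Lemma 5: at every iteration `i` of Algorithm 2 run with the x-approval
rule, `|U^i| = 1` or `|D^i| = 1`. -/
theorem lemma5_U_or_D_singleton
    (x : ℕ) (hx1 : 1 ≤ x) (hx2 : x < Fintype.card O)
    (tb : O → ℕ) (P : List (O → ℕ)) (po : O → ℕ) (p : O) (i k : ℕ)
    (htb : Function.Injective tb) (hP : ∀ q ∈ P, IsVote q) (hpo : IsVote po)
    (hi1 : 1 ≤ i) (hi2 : i ≤ (Fintype.card O + 1) / 2) :
    (UsetAlg (approvalVec (Fintype.card O) x) tb P po p i k).card = 1 ∨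
      (DsetAlg (approvalVec (Fintype.card O) x) tb P po p i k).card = 1 :=
  lemma5_U_or_D_singleton_general x htb P (Hset_nonempty _ po p i)
    (Hset_ne_univ (swf_injective _ htb P) po p hi1 (by omega)) k
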